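/- Let X be a compact metric space, T: X → X a continuous map, μ a T-invariant Borel probability measure on X, and A = (t_i)_{i≥1} a sequence of natural numbers. For finite F ⊂ ℕ, ε > 0, and δ ∈ (0,1), let spa(T,F,ε,δ) be the minimal number of Bowen (ε,F)-balls needed to cover a subset of X of μ-measure at least 1−δ. Then h^A_μ(T) ≤ lim_{δ→0⁺} lim_{ε→0⁺} limsup_n (1/n) log spa(T,{t₁,…,t_n},ε,δ). -/

import Mathlib

open Filter MeasureTheory

variable {X : Type*} [MetricSpace X]

/-- A finite measurable partition of `X`, modelled with atoms indexed by `Fin k`. -/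
def IsMeasPartition {X : Type*} [MeasurableSpace X] {k : ℕ} (ξ : Fin k → Set X) : Prop :=
  (∀ i, MeasurableSet (ξ i)) ∧ Pairwise (Function.onFun Disjoint ξ) ∧ (⋃ i, ξ i) = Set.univ

/-- `H(ξ^F)` : the Shannon entropy of the join `⋁_{i∈F} T^{−i}ξ`, whose atoms are the
intersections `⋂_{i∈F} T^{−i} ξ(g i)` over all choices `g`. -/
noncomputable def Hjoin {X : Type*} [MeasurableSpace X] (μ : MeasureTheory.Measure X)
    (T : X → X) (F : Finset ℕ) {k : ℕ} (ξ : Fin k → Set X) : ℝ :=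
  ∑ g : {i // i ∈ F} → Fin k,
    Real.negMulLog (μ (⋂ i : {i // i ∈ F}, T^[(i : ℕ)] ⁻¹' ξ (g i))).toReal

/-- Measure-theoretic sequence entropy along `A = (t_i)_{i ≥ 1}`:
`h^A_μ(T) = sup_ξ limsup_n (1/n) H(ξ^{{t₁,…,t_n}})`, the supremum over all finite
measurable partitions `ξ`. -/
noncomputable def seqEntMeas {X : Type*} [MeasurableSpace X] (μ : MeasureTheory.Measure X)
    (T : X → X) (A : ℕ → ℕ) : EReal :=
  ⨆ (k : ℕ) (ξ : Fin k → Set X) (_ : IsMeasPartition ξ),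
    Filter.limsup
      (fun n : ℕ => ((Hjoin μ T ((Finset.Icc 1 n).image A) ξ / n : ℝ) : EReal))
      Filter.atTop

/-- `spaMeasN μ T F ε δ` : the minimal number of Bowen `(ε,F)`-balls
`{x | ∀ i ∈ F, dist (T^[i] x) (T^[i] e) < ε}` needed to cover a subset of `X` of
`μ`-measure at least `1 − δ`. -/
noncomputable def spaMeasN [MeasurableSpace X] (μ : Measure X) (T : X → X)
    (F : Finset ℕ) (ε δ : ℝ) : ℕ :=
  sInf {k : ℕ | ∃ E : Finset X, E.card = k ∧
    ENNReal.ofReal (1 - δ) ≤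
      μ (⋃ e ∈ E, {x : X | ∀ i ∈ F, dist (T^[i] x) (T^[i] e) < ε})}

/-!
Code every itinerary of length `n` by the itinerary of the centre of a Bowen ball containing the
point. On a set `K` of measure close to `1` the partition is uniformly separated, so a point and its
centre are coded by the same letter at every time at which the orbit visits `K`. By invariance the
mean Hamming distance between the two words is then at most `n` times a small constant, and Gibbs'
inequality against the weights `exp (-s * distance to the code)` bounds the entropy of the itinerary
by the logarithm of the number of balls plus a small multiple of `n`.
-/

section Entropy

variable {Ω β : Type*} [MeasurableSpace Ω] [Fintype β]

/-- Shannon entropy of the law under `μ` of a random variable `Y` with finitely many values. The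
entropy of a finite partition is that of its index function. -/
noncomputable def shannonEntropy (μ : Measure Ω) (Y : Ω → β) : ℝ :=
  ∑ y, Real.negMulLog (μ.real (Y ⁻¹' {y}))

lemma negMulLog_le_neg_mul_log_add_sub {p q : ℝ} (hp : 0 ≤ p) (hq : 0 < q) :
    Real.negMulLog p ≤ -(p * Real.log q) + (q - p) := by
  have tangent : p / q - 1 ≤ p / q * Real.log (p / q) :=
    Real.self_sub_one_le_mul_log (by positivity)
  calc Real.negMulLog p = Real.negMulLog (q * (p / q)) := by rw [mul_div_cancel₀ p hq.ne']
    _ = -(p * Real.log q) - q * (p / q * Real.log (p / q)) := by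
        rw [Real.negMulLog_mul, Real.negMulLog, Real.negMulLog]; field_simp; ring
    _ ≤ -(p * Real.log q) - q * (p / q - 1) := by gcongr
    _ = -(p * Real.log q) + (q - p) := by field_simp; ring

lemma sum_negMulLog_le_log_sum_exp_neg_add_sum_mul {p : β → ℝ} (hp : ∀ y, 0 ≤ p y)
    (hp_sum : ∑ y, p y = 1) (V : β → ℝ) :
    ∑ y, Real.negMulLog (p y) ≤ Real.log (∑ y, Real.exp (-V y)) + ∑ y, p y * V y := by
  have : Nonempty β := by
    by_contra h
    simp [not_nonempty_iff.1 h] at hp_sum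
  set Z := ∑ y, Real.exp (-V y)
  have hZ : 0 < Z := Finset.sum_pos (fun y _ => Real.exp_pos _) Finset.univ_nonempty
  have hlog (y : β) : Real.log (Real.exp (-V y) / Z) = -V y - Real.log Z := by
    rw [Real.log_div (Real.exp_pos _).ne' hZ.ne', Real.log_exp]
  calc ∑ y, Real.negMulLog (p y)
      ≤ ∑ y, (-(p y * Real.log (Real.exp (-V y) / Z)) + (Real.exp (-V y) / Z - p y)) :=
        Finset.sum_le_sum fun y _ => negMulLog_le_neg_mul_log_add_sub (hp y) (by positivity)
    _ = ∑ y, (p y * Real.log Z + p y * V y + (Real.exp (-V y) / Z - p y)) := by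
        refine Finset.sum_congr rfl fun y _ => ?_
        rw [hlog]; ring
    _ = Real.log Z + ∑ y, p y * V y := by
        rw [Finset.sum_add_distrib, Finset.sum_add_distrib, Finset.sum_sub_distrib,
          ← Finset.sum_mul, ← Finset.sum_div, hp_sum, div_self hZ.ne']
        ring

variable [MeasurableSpace β] [MeasurableSingletonClass β] {μ : Measure Ω} {Y : Ω → β}

lemma sum_measureReal_preimage_singleton_mul [IsFiniteMeasure μ] (hY : Measurable Y)
    (f : β → ℝ) : ∑ y, μ.real (Y ⁻¹' {y}) * f y = ∫ x, f (Y x) ∂μ := by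
  rw [← integral_map hY.aemeasurable (measurable_of_finite f).aestronglyMeasurable,
    integral_fintype .of_finite]
  refine Finset.sum_congr rfl fun y _ => ?_
  rw [map_measureReal_apply hY (measurableSet_singleton y), smul_eq_mul]

theorem shannonEntropy_le_log_sum_exp_neg_add_integral [IsProbabilityMeasure μ]
    (hY : Measurable Y) (V : β → ℝ) :
    shannonEntropy μ Y ≤ Real.log (∑ y, Real.exp (-V y)) + ∫ x, V (Y x) ∂μ := by
  have hsum : ∑ y, μ.real (Y ⁻¹' {y}) = 1 := by
    simpa using sum_measureReal_preimage_singleton_mul (μ := μ) hY fun _ => 1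
  rw [← sum_measureReal_preimage_singleton_mul hY]
  exact sum_negMulLog_le_log_sum_exp_neg_add_sum_mul (fun _ => measureReal_nonneg) hsum V

end Entropy

section Coding

variable {ι κ : Type*} [Fintype ι] [DecidableEq ι] [Fintype κ] [DecidableEq κ]

lemma sum_exp_neg_mul_hammingDist (s : ℝ) (w : ι → κ) :
    ∑ g : ι → κ, Real.exp (-(s * hammingDist w g)) =
      (1 + (Fintype.card κ - 1) * Real.exp (-s)) ^ Fintype.card ι := by
  have hletter (a : κ) : ∑ b, (if a = b then 1 else Real.exp (-s)) =
      1 + (Fintype.card κ - 1) * Real.exp (-s) := by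
    rw [← Finset.add_sum_erase _ _ (Finset.mem_univ a), if_pos rfl,
      Finset.sum_congr rfl fun b hb => if_neg (Finset.ne_of_mem_erase hb).symm,
      Finset.sum_const, Finset.card_erase_of_mem (Finset.mem_univ a), Finset.card_univ,
      nsmul_eq_mul, Nat.cast_pred (Fintype.card_pos_iff.2 ⟨a⟩)]
  have hword (g : ι → κ) : Real.exp (-(s * hammingDist w g)) =
      ∏ i, if w i = g i then 1 else Real.exp (-s) := by
    rw [Finset.prod_ite, Finset.prod_const_one, one_mul, Finset.prod_const, ← Real.exp_nat_mul,
      hammingDist, mul_neg, mul_comm]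
  calc ∑ g : ι → κ, Real.exp (-(s * hammingDist w g))
      = ∑ g : ι → κ, ∏ i, if w i = g i then 1 else Real.exp (-s) :=
        Finset.sum_congr rfl fun g _ => hword g
    _ = ∏ i, ∑ b, if w i = b then 1 else Real.exp (-s) := by
        rw [Finset.prod_univ_sum, Fintype.piFinset_univ]
    _ = (1 + (Fintype.card κ - 1) * Real.exp (-s)) ^ Fintype.card ι := by
        simp only [hletter, Finset.prod_const, Finset.card_univ]

lemma sum_exp_neg_mul_hammingDist_le (s : ℝ) (w : ι → κ) :
    ∑ g : ι → κ, Real.exp (-(s * hammingDist w g)) ≤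
      Real.exp (Fintype.card ι * (Fintype.card κ * Real.exp (-s))) := by
  rw [sum_exp_neg_mul_hammingDist, Real.exp_nat_mul]
  rcases isEmpty_or_nonempty ι with hι | ⟨⟨i⟩⟩
  · simp
  have hκ : (1 : ℝ) ≤ Fintype.card κ := by exact_mod_cast Fintype.card_pos_iff.2 ⟨w i⟩
  gcongr
  nlinarith [Real.exp_pos (-s), Real.add_one_le_exp (Fintype.card κ * Real.exp (-s))]

lemma log_sum_exp_neg_le_of_forall_exists_hammingDist_le {W : Finset (ι → κ)} (hW : W.Nonempty)
    {s : ℝ} {V : (ι → κ) → ℝ} (hV : ∀ g, ∃ w ∈ W, s * hammingDist w g ≤ V g) :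
    Real.log (∑ g, Real.exp (-V g)) ≤
      Real.log W.card + Fintype.card ι * (Fintype.card κ * Real.exp (-s)) := by
  have hterm (g : ι → κ) : Real.exp (-V g) ≤ ∑ w ∈ W, Real.exp (-(s * hammingDist w g)) := by
    obtain ⟨w, hwW, hw⟩ := hV g
    calc Real.exp (-V g) ≤ Real.exp (-(s * hammingDist w g)) := by gcongr
      _ ≤ ∑ w ∈ W, Real.exp (-(s * hammingDist w g)) :=
        Finset.single_le_sum (f := fun w => Real.exp (-(s * hammingDist w g)))
          (fun _ _ => (Real.exp_pos _).le) hwW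
  have hsum : ∑ g, Real.exp (-V g) ≤
      W.card * Real.exp (Fintype.card ι * (Fintype.card κ * Real.exp (-s))) :=
    calc ∑ g, Real.exp (-V g) ≤ ∑ g, ∑ w ∈ W, Real.exp (-(s * hammingDist w g)) :=
          Finset.sum_le_sum fun g _ => hterm g
      _ = ∑ w ∈ W, ∑ g, Real.exp (-(s * hammingDist w g)) := Finset.sum_comm
      _ ≤ W.card * Real.exp (Fintype.card ι * (Fintype.card κ * Real.exp (-s))) := by
          rw [← nsmul_eq_mul]
          exact Finset.sum_le_card_nsmul _ _ _ fun w _ => sum_exp_neg_mul_hammingDist_le s w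
  have hpos : 0 < ∑ g, Real.exp (-V g) :=
    Finset.sum_pos (fun _ _ => Real.exp_pos _) ⟨hW.choose, Finset.mem_univ _⟩
  have hcard : (W.card : ℝ) ≠ 0 := by exact_mod_cast hW.card_ne_zero
  calc Real.log (∑ g, Real.exp (-V g))
      ≤ Real.log (W.card * Real.exp (Fintype.card ι * (Fintype.card κ * Real.exp (-s)))) :=
        Real.log_le_log hpos hsum
    _ = Real.log W.card + Fintype.card ι * (Fintype.card κ * Real.exp (-s)) := by
        rw [Real.log_mul hcard (Real.exp_pos _).ne', Real.log_exp]

theorem shannonEntropy_le_log_card_add_integral_of_hammingDist_le [MeasurableSpace κ]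
    [MeasurableSingletonClass κ] {Ω : Type*} [MeasurableSpace Ω] {μ : Measure Ω}
    [IsProbabilityMeasure μ] {Y : Ω → ι → κ} (hY : Measurable Y) (W : Finset (ι → κ))
    {D : Ω → ℝ} (hD : Integrable D μ) (hYW : ∀ x, ∃ w ∈ W, hammingDist w (Y x) ≤ D x)
    {s : ℝ} (hs : 0 ≤ s) :
    shannonEntropy μ Y ≤ Real.log W.card +
      Fintype.card ι * (Fintype.card κ * Real.exp (-s)) + s * ∫ x, D x ∂μ := by
  have : Nonempty Ω := μ.nonempty_of_neZero
  obtain ⟨w₀, hw₀, -⟩ := hYW (Classical.arbitrary Ω)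
  have hW : W.Nonempty := ⟨w₀, hw₀⟩
  let V : (ι → κ) → ℝ := fun g => s * W.inf' hW fun w => (hammingDist w g : ℝ)
  have hV (g : ι → κ) : ∃ w ∈ W, s * hammingDist w g ≤ V g := by
    obtain ⟨w, hwW, hw⟩ := W.exists_mem_eq_inf' hW fun w => (hammingDist w g : ℝ)
    exact ⟨w, hwW, by rw [← hw]⟩
  have hVD (x : Ω) : V (Y x) ≤ s * D x := by
    obtain ⟨w, hwW, hw⟩ := hYW x
    exact mul_le_mul_of_nonneg_left ((W.inf'_le _ hwW).trans hw) hs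
  have hVint : Integrable (fun x => V (Y x)) μ :=
    have := Measure.isProbabilityMeasure_map (μ := μ) hY.aemeasurable
    (Integrable.of_finite (μ := μ.map Y) (f := V)).comp_measurable hY
  calc shannonEntropy μ Y ≤ Real.log (∑ g, Real.exp (-V g)) + ∫ x, V (Y x) ∂μ :=
        shannonEntropy_le_log_sum_exp_neg_add_integral hY V
    _ ≤ Real.log W.card + Fintype.card ι * (Fintype.card κ * Real.exp (-s)) +
          s * ∫ x, D x ∂μ := by
        rw [← integral_const_mul]
        exact add_le_add (log_sum_exp_neg_le_of_forall_exists_hammingDist_le hW hV)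
          (integral_mono hVint (hD.const_mul s) hVD)

end Coding

section Separation

variable {α : Type*} [PseudoMetricSpace α]

theorem exists_measurableSet_forall_le_dist [MeasurableSpace α] [BorelSpace α] (μ : Measure α)
    [IsFiniteMeasure μ] {A : Set α} (hA : MeasurableSet A) {η : ENNReal} (hη : η ≠ 0) :
    ∃ K, MeasurableSet K ∧ μ Kᶜ ≤ η ∧
      ∃ ε : ℝ, 0 < ε ∧ ∀ x ∈ K ∩ A, ∀ y ∈ K \ A, ε ≤ dist x y := by
  have hη2 : η / 2 ≠ 0 := (ENNReal.half_pos hη).ne'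
  obtain ⟨C, hCA, hC, hAC⟩ := hA.exists_isClosed_sdiff_lt (measure_ne_top μ A) hη2
  have hlim : Tendsto (fun r => μ (Metric.cthickening r C)) (nhdsWithin 0 (Set.Ioi 0))
      (nhds (μ C)) :=
    (tendsto_measure_cthickening_of_isClosed ⟨1, one_pos, measure_ne_top _ _⟩ hC).mono_left
      nhdsWithin_le_nhds
  obtain ⟨r, hr, hr0 : 0 < r⟩ := ((hlim.eventually_lt_const
    (ENNReal.lt_add_right (measure_ne_top μ C) hη2)).and self_mem_nhdsWithin).exists
  have hcollar : μ (Metric.cthickening r C \ C) < η / 2 :=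
    measure_sdiff_lt_of_lt_add hC.nullMeasurableSet (Metric.self_subset_cthickening C)
      (measure_ne_top μ C) hr
  -- Discard from `A` all but a closed set `C`, and from `Aᶜ` a thin collar around `C`.
  refine ⟨C ∪ (A ∪ Metric.cthickening r C)ᶜ,
    hC.measurableSet.union (hA.union Metric.isClosed_cthickening.measurableSet).compl,
    ?_, r, hr0, ?_⟩
  · have hsub : (C ∪ (A ∪ Metric.cthickening r C)ᶜ)ᶜ ⊆ A \ C ∪ Metric.cthickening r C \ C := by
      intro x hx
      simp only [Set.mem_compl_iff, Set.mem_union, Set.mem_sdiff] at hx ⊢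
      tauto
    calc μ (C ∪ (A ∪ Metric.cthickening r C)ᶜ)ᶜ
        ≤ μ (A \ C) + μ (Metric.cthickening r C \ C) :=
          (measure_mono hsub).trans (measure_union_le _ _)
      _ ≤ η / 2 + η / 2 := add_le_add hAC.le hcollar.le
      _ = η := ENNReal.add_halves η
  · rintro x ⟨hxC | hx, hxA⟩ y ⟨hyC | hy, hyA⟩
    · exact absurd (hCA hyC) hyA
    · rw [dist_comm]
      by_contra! hlt
      exact hy (Or.inr (Metric.mem_cthickening_of_dist_le y x r C hxC hlt.le))
    all_goals exact absurd (Or.inl hxA) hx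

theorem exists_measurableSet_forall_dist_lt_imp_eq [MeasurableSpace α] [BorelSpace α]
    (μ : Measure α) [IsFiniteMeasure μ] {κ : Type*} [Finite κ] [MeasurableSpace κ]
    [MeasurableSingletonClass κ] {φ : α → κ} (hφ : Measurable φ) {η : ENNReal} (hη : η ≠ 0) :
    ∃ K, MeasurableSet K ∧ μ Kᶜ ≤ η ∧
      ∃ ε : ℝ, 0 < ε ∧ ∀ x ∈ K, ∀ y ∈ K, dist x y < ε → φ x = φ y := by
  obtain ⟨η', hη', hsum⟩ := ENNReal.exists_pos_sum_of_countable' hη κ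
  choose K hK hKη ε hε hsep using fun a : κ =>
    exists_measurableSet_forall_le_dist μ (hφ (measurableSet_singleton a)) (hη' a).ne'
  obtain ⟨⟨ε₀, hε₀⟩, hε₀ε⟩ := Finite.exists_ge fun a => (⟨ε a, hε a⟩ : Set.Ioi (0 : ℝ))
  refine ⟨⋂ a, K a, .iInter hK, ?_, ε₀, hε₀, fun x hx y hy hxy => ?_⟩
  · calc μ (⋂ a, K a)ᶜ = μ (⋃ a, (K a)ᶜ) := by rw [Set.compl_iInter]
      _ ≤ ∑' a, μ (K a)ᶜ := measure_iUnion_le _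
      _ ≤ ∑' a, η' a := ENNReal.tsum_le_tsum hKη
      _ ≤ η := hsum.le
  · by_contra hne
    have hle : ε (φ x) ≤ dist x y := hsep (φ x) x ⟨Set.mem_iInter.1 hx _, rfl⟩ y
      ⟨Set.mem_iInter.1 hy _, fun h => hne h.symm⟩
    have hmin : ε₀ ≤ ε (φ x) := hε₀ε (φ x)
    exact hxy.not_ge (hmin.trans hle)

lemma exists_forall_dist_lt_half_imp_eq {κ : Type*} {φ : α → κ} {K : Set α} {ε : ℝ}
    (h : ∀ x ∈ K, ∀ y ∈ K, dist x y < ε → φ x = φ y) :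
    ∃ c : α → κ, ∀ x ∈ K, ∀ e, dist x e < ε / 2 → c e = φ x := by
  classical
  refine ⟨fun e => if he : ∃ y ∈ K, dist y e < ε / 2 then φ he.choose else φ e,
    fun x hx e hxe => ?_⟩
  have he : ∃ y ∈ K, dist y e < ε / 2 := ⟨x, hx, hxe⟩
  obtain ⟨hyK, hye⟩ := he.choose_spec
  simp only [dif_pos he]
  exact h _ hyK x hx ((dist_triangle_right _ x e).trans_lt (by linarith))

end Separation

section Bowen

variable {α : Type*}

/-- The Bowen `(ε, F)`-ball around `e`, i.e. the ball of radius `ε` for the Bowen metric. It is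
spelled out as in `spaMeasN`, so that it also makes sense when `F` is empty. -/
def bowenBall [PseudoMetricSpace α] (T : α → α) (F : Finset ℕ) (ε : ℝ) (e : α) : Set α :=
  {x | ∀ i ∈ F, dist (T^[i] x) (T^[i] e) < ε}

/-- The word of letters `φ` read at the times `F` along the orbit of a point. If `φ` is the index
function of a partition `ξ`, the level sets of the itinerary are the atoms of `ξ^F`. -/
def itinerary {κ : Type*} (T : α → α) (F : Finset ℕ) (φ : α → κ) (x : α) : {i // i ∈ F} → κ :=
  fun i => φ (T^[i] x)

lemma measurable_itinerary {κ : Type*} [MeasurableSpace α] [MeasurableSpace κ] {T : α → α}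
    (hT : Measurable T) (F : Finset ℕ) {φ : α → κ} (hφ : Measurable φ) :
    Measurable (itinerary T F φ) :=
  measurable_pi_lambda _ fun i => hφ.comp (hT.iterate i)

lemma measurableSet_bowenBall [PseudoMetricSpace α] [MeasurableSpace α] [OpensMeasurableSpace α]
    {T : α → α} (hT : Measurable T) (F : Finset ℕ) (ε : ℝ) (e : α) :
    MeasurableSet (bowenBall T F ε e) := by
  have heq : bowenBall T F ε e = ⋂ i ∈ F, T^[i] ⁻¹' Metric.ball (T^[i] e) ε := by
    ext x; simp [bowenBall]
  rw [heq]
  exact F.measurableSet_biInter fun i _ => hT.iterate i measurableSet_ball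

lemma exists_countable_biUnion_bowenBall_eq_univ [PseudoMetricSpace α]
    [SecondCountableTopology α] (T : α → α) (F : Finset ℕ) {ε : ℝ} (hε : 0 < ε) :
    ∃ S : Set α, S.Countable ∧ ⋃ e ∈ S, bowenBall T F ε e = Set.univ := by
  have hball (e : α) :
      bowenBall T F ε e = itinerary T F id ⁻¹' Metric.ball (itinerary T F id e) ε := by
    ext x; simp [bowenBall, itinerary, dist_pi_lt_iff hε]
  obtain ⟨S, hS, hcover⟩ := TopologicalSpace.isOpen_iUnion_countable
    (fun e => Metric.ball (itinerary T F id e) ε) fun _ => Metric.isOpen_ball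
  refine ⟨S, hS, Set.eq_univ_of_forall fun x => ?_⟩
  simp only [hball, ← Set.preimage_iUnion₂, hcover]
  exact Set.mem_iUnion.2 ⟨x, Metric.mem_ball_self hε⟩

lemma exists_finset_lt_measure_biUnion {ι : Type*} [MeasurableSpace α] (μ : Measure α)
    {S : Set ι} (hS : S.Countable) (B : ι → Set α) {m : ENNReal} (hm : m < μ (⋃ e ∈ S, B e)) :
    ∃ E : Finset ι, m < μ (⋃ e ∈ E, B e) := by
  classical
  have := hS.to_subtype
  have hunion : ⋃ e ∈ S, B e = ⋃ E : Finset S, ⋃ e ∈ E, B e := by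
    rw [Set.biUnion_eq_iUnion]
    exact Set.iUnion_eq_iUnion_finset _
  have hdir : Directed (· ⊆ ·) fun E : Finset S => ⋃ e ∈ E, B e :=
    Monotone.directed_le fun _ _ h => Set.biUnion_subset_biUnion_left h
  rw [hunion, hdir.measure_iUnion, lt_iSup_iff] at hm
  obtain ⟨E, hE⟩ := hm
  exact ⟨E.image (↑), by simpa only [Finset.set_biUnion_finset_image] using hE⟩

theorem exists_finset_card_eq_spaMeasN [SecondCountableTopology X] [MeasurableSpace X]
    [OpensMeasurableSpace X] {T : X → X} (hT : Measurable T) (μ : Measure X)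
    [IsProbabilityMeasure μ] (F : Finset ℕ) {ε δ : ℝ} (hε : 0 < ε) (hδ : 0 < δ) :
    ∃ E : Finset X, E.card = spaMeasN μ T F ε δ ∧ μ.real (⋃ e ∈ E, bowenBall T F ε e)ᶜ ≤ δ := by
  have hne : {k : ℕ | ∃ E : Finset X, E.card = k ∧
      ENNReal.ofReal (1 - δ) ≤ μ (⋃ e ∈ E, bowenBall T F ε e)}.Nonempty := by
    obtain ⟨S, hS, hcover⟩ := exists_countable_biUnion_bowenBall_eq_univ T F hε
    obtain ⟨E, hE⟩ := exists_finset_lt_measure_biUnion μ hS (bowenBall T F ε)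
      (m := ENNReal.ofReal (1 - δ)) (by
        rw [hcover, measure_univ]
        exact ENNReal.ofReal_lt_one.2 (by linarith))
    exact ⟨_, E, rfl, hE.le⟩
  obtain ⟨E, hcard, hE⟩ := Nat.sInf_mem hne
  have hEreal : 1 - δ ≤ μ.real (⋃ e ∈ E, bowenBall T F ε e) :=
    (ENNReal.ofReal_le_iff_le_toReal (measure_ne_top _ _)).1 hE
  refine ⟨E, hcard, ?_⟩
  rw [probReal_compl_eq_one_sub
    (E.measurableSet_biUnion fun e _ => measurableSet_bowenBall hT F ε e)]
  linarith

end Bowen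

section Itinerary

variable {α κ : Type*} {T : α → α}

lemma integral_sum_indicator_iterate [MeasurableSpace α] {μ : Measure α} [IsFiniteMeasure μ]
    (hT : MeasurePreserving T μ μ) (F : Finset ℕ) {B : Set α} (hB : MeasurableSet B) :
    Integrable (fun x => ∑ i ∈ F, B.indicator (1 : α → ℝ) (T^[i] x)) μ ∧
      ∫ x, ∑ i ∈ F, B.indicator (1 : α → ℝ) (T^[i] x) ∂μ = F.card * μ.real B := by
  have hcomp (i : ℕ) : (fun x => B.indicator (1 : α → ℝ) (T^[i] x)) =
      (T^[i] ⁻¹' B).indicator 1 := rfl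
  have hmeas (i : ℕ) : MeasurableSet (T^[i] ⁻¹' B) := (hT.iterate i).measurable hB
  have hint (i : ℕ) : Integrable (fun x => B.indicator (1 : α → ℝ) (T^[i] x)) μ :=
    (integrable_const (1 : ℝ)).indicator (hmeas i)
  refine ⟨integrable_finsetSum _ fun i _ => hint i, ?_⟩
  rw [integral_finsetSum _ fun i _ => hint i]
  simp only [hcomp, integral_indicator_one (hmeas _),
    (hT.iterate _).measureReal_preimage hB.nullMeasurableSet, Finset.sum_const, nsmul_eq_mul]

variable [PseudoMetricSpace α] {φ c : α → κ} {K : Set α} {ε : ℝ}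

lemma hammingDist_itinerary_le_sum_indicator [DecidableEq κ]
    (hc : ∀ x ∈ K, ∀ e, dist x e < ε → c e = φ x) (F : Finset ℕ) {e x : α}
    (hx : x ∈ bowenBall T F ε e) :
    (hammingDist (itinerary T F c e) (itinerary T F φ x) : ℝ) ≤
      ∑ i ∈ F, Kᶜ.indicator (1 : α → ℝ) (T^[i] x) := by
  rw [hammingDist, ← Finset.sum_boole,
    ← Finset.sum_coe_sort F fun i => Kᶜ.indicator (1 : α → ℝ) (T^[i] x)]
  refine Finset.sum_le_sum fun i _ => ?_
  by_cases hxK : T^[i] x ∈ K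
  · have heq : itinerary T F c e i = itinerary T F φ x i := hc _ hxK _ (hx i i.2)
    simp [heq, hxK]
  · rw [Set.indicator_of_mem (Set.mem_compl hxK)]
    split_ifs <;> simp

lemma exists_mem_image_itinerary_hammingDist_le [DecidableEq κ]
    (hc : ∀ x ∈ K, ∀ e, dist x e < ε → c e = φ x) (F : Finset ℕ) {E : Finset α}
    (hE : E.Nonempty) (x : α) :
    ∃ w ∈ E.image (itinerary T F c), (hammingDist w (itinerary T F φ x) : ℝ) ≤
      ∑ i ∈ F, Kᶜ.indicator (1 : α → ℝ) (T^[i] x) +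
        F.card * (⋃ e ∈ E, bowenBall T F ε e)ᶜ.indicator (1 : α → ℝ) x := by
  have hnonneg (B : Set α) (y : α) : 0 ≤ B.indicator (1 : α → ℝ) y :=
    Set.indicator_nonneg (fun _ _ => zero_le_one) y
  by_cases hx : x ∈ ⋃ e ∈ E, bowenBall T F ε e
  · obtain ⟨e, he, hxe⟩ := Set.mem_iUnion₂.1 hx
    exact ⟨_, Finset.mem_image_of_mem _ he, le_add_of_le_of_nonneg
      (hammingDist_itinerary_le_sum_indicator hc F hxe)
      (mul_nonneg (Nat.cast_nonneg _) (hnonneg _ x))⟩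
  · obtain ⟨e, he⟩ := hE
    refine ⟨_, Finset.mem_image_of_mem _ he, le_add_of_nonneg_of_le
      (Finset.sum_nonneg fun i _ => hnonneg _ _) ?_⟩
    rw [Set.indicator_of_mem (Set.mem_compl hx), Pi.one_apply, mul_one]
    exact_mod_cast hammingDist_le_card_fintype.trans (Fintype.card_coe F).le

theorem shannonEntropy_itinerary_le [MeasurableSpace α] [OpensMeasurableSpace α] {μ : Measure α}
    [IsProbabilityMeasure μ] (hT : MeasurePreserving T μ μ) [Fintype κ] [MeasurableSpace κ]
    [MeasurableSingletonClass κ] (hφ : Measurable φ) (hK : MeasurableSet K)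
    (hc : ∀ x ∈ K, ∀ e, dist x e < ε → c e = φ x) (F : Finset ℕ) {E : Finset α}
    (hE : E.Nonempty) {s : ℝ} (hs : 0 ≤ s) :
    shannonEntropy μ (itinerary T F φ) ≤ Real.log E.card + F.card *
      (Fintype.card κ * Real.exp (-s) +
        s * (μ.real Kᶜ + μ.real (⋃ e ∈ E, bowenBall T F ε e)ᶜ)) := by
  classical
  set U := ⋃ e ∈ E, bowenBall T F ε e
  have hU : MeasurableSet U :=
    E.measurableSet_biUnion fun e _ => measurableSet_bowenBall hT.measurable F ε e
  obtain ⟨hD₁, hD₁_eq⟩ := integral_sum_indicator_iterate hT F hK.compl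
  have hD₂ : Integrable (fun x => F.card * Uᶜ.indicator (1 : α → ℝ) x) μ :=
    ((integrable_const (1 : ℝ)).indicator hU.compl).const_mul _
  have hmean : ∫ x, (∑ i ∈ F, Kᶜ.indicator (1 : α → ℝ) (T^[i] x) +
      F.card * Uᶜ.indicator (1 : α → ℝ) x) ∂μ = F.card * (μ.real Kᶜ + μ.real Uᶜ) := by
    rw [integral_add hD₁ hD₂, hD₁_eq, integral_const_mul, integral_indicator_one hU.compl, mul_add]
  have hcode := shannonEntropy_le_log_card_add_integral_of_hammingDist_le
    (measurable_itinerary hT.measurable F hφ) _ (hD₁.add hD₂)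
    (exists_mem_image_itinerary_hammingDist_le hc F hE) hs
  simp only [Pi.add_apply, Fintype.card_coe, hmean] at hcode
  have hcard : Real.log (E.image (itinerary T F c)).card ≤ Real.log E.card :=
    Real.log_le_log (by exact_mod_cast (hE.image _).card_pos)
      (by exact_mod_cast Finset.card_image_le)
  linarith

end Itinerary

lemma IsMeasPartition.exists_measurable_preimage_singleton_eq {Ω : Type*} [MeasurableSpace Ω]
    {k : ℕ} {ξ : Fin k → Set Ω} (hξ : IsMeasPartition ξ) :
    ∃ φ : Ω → Fin k, Measurable φ ∧ ∀ a, φ ⁻¹' {a} = ξ a := by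
  obtain ⟨hmeas, hdisj, hcover⟩ := hξ
  choose φ hφ using fun x => Set.mem_iUnion.1 (hcover ▸ Set.mem_univ x)
  have hpre (a : Fin k) : φ ⁻¹' {a} = ξ a := by
    ext x
    refine ⟨fun h => h ▸ hφ x, fun h => ?_⟩
    by_contra hne
    exact Set.disjoint_left.1 (hdisj hne) (hφ x) h
  exact ⟨φ, measurable_to_countable' fun a => hpre a ▸ hmeas a, hpre⟩

lemma Hjoin_eq_shannonEntropy_itinerary {Ω : Type*} [MeasurableSpace Ω] (μ : Measure Ω)
    (T : Ω → Ω) (F : Finset ℕ) {k : ℕ} (φ : Ω → Fin k) :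
    Hjoin μ T F (fun a => φ ⁻¹' {a}) = shannonEntropy μ (itinerary T F φ) := by
  refine Finset.sum_congr rfl fun g _ => ?_
  congr 3
  ext x
  simp [itinerary, funext_iff]

lemma exists_pos_add_mul_exp_neg_le (k : ℝ) {τ : ℝ} (hτ : 0 < τ) :
    ∃ s : ℝ, 0 < s ∧ k * Real.exp (-s) + s * (Real.exp (-s) + Real.exp (-s)) ≤ τ := by
  have hlim : Tendsto (fun s : ℝ => k * Real.exp (-s) + 2 * (s ^ 1 * Real.exp (-s))) atTop
      (nhds (k * 0 + 2 * 0)) :=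
    (Real.tendsto_exp_neg_atTop_nhds_zero.const_mul k).add
      ((Real.tendsto_pow_mul_exp_neg_atTop_nhds_zero 1).const_mul 2)
  obtain ⟨s, hs, hs0⟩ := ((hlim.eventually_lt_const (by simpa using hτ)).and
    (eventually_gt_atTop 0)).exists
  exact ⟨s, hs0, by linarith⟩

theorem IsMeasPartition.exists_Hjoin_le_log_spaMeasN_add [SecondCountableTopology X]
    [MeasurableSpace X] [BorelSpace X] {T : X → X} {μ : Measure X} [IsProbabilityMeasure μ]
    (hT : MeasurePreserving T μ μ) {k : ℕ} {ξ : Fin k → Set X} (hξ : IsMeasPartition ξ)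
    {τ : ℝ} (hτ : 0 < τ) :
    ∃ δ : ℝ, 0 < δ ∧ δ < 1 ∧ ∃ ε : ℝ, 0 < ε ∧
      ∀ F : Finset ℕ, Hjoin μ T F ξ ≤ Real.log (spaMeasN μ T F ε δ) + F.card * τ := by
  obtain ⟨φ, hφ, hφξ⟩ := hξ.exists_measurable_preimage_singleton_eq
  obtain rfl : (fun a => φ ⁻¹' {a}) = ξ := funext hφξ
  obtain ⟨s, hs, hsτ⟩ := exists_pos_add_mul_exp_neg_le k hτ
  set δ := Real.exp (-s)
  have hδ0 : 0 < δ := Real.exp_pos _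
  have hδ1 : δ < 1 := Real.exp_lt_one_iff.2 (neg_lt_zero.2 hs)
  obtain ⟨K, hK, hKδ, ε, hε, hsep⟩ := exists_measurableSet_forall_dist_lt_imp_eq μ hφ
    (ENNReal.ofReal_pos.2 hδ0).ne'
  have hKδ' : μ.real Kᶜ ≤ δ := ENNReal.toReal_le_of_le_ofReal hδ0.le hKδ
  obtain ⟨c, hc⟩ := exists_forall_dist_lt_half_imp_eq hsep
  refine ⟨δ, hδ0, hδ1, ε / 2, half_pos hε, fun F => ?_⟩
  obtain ⟨E, hEcard, hEδ⟩ :=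
    exists_finset_card_eq_spaMeasN hT.measurable μ F (half_pos hε) hδ0
  have hE : E.Nonempty := by
    rw [Finset.nonempty_iff_ne_empty]
    rintro rfl
    simp at hEδ
    linarith
  rw [Hjoin_eq_shannonEntropy_itinerary, ← hEcard]
  refine (shannonEntropy_itinerary_le hT hφ hK hc F hE hs.le).trans ?_
  rw [Fintype.card_fin]
  have hrate : k * Real.exp (-s) +
      s * (μ.real Kᶜ + μ.real (⋃ e ∈ E, bowenBall T F (ε / 2) e)ᶜ) ≤ τ :=
    le_trans (add_le_add_right (mul_le_mul_of_nonneg_left (add_le_add hKδ' hEδ) hs.le) _) hsτ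
  exact add_le_add_right (mul_le_mul_of_nonneg_left hrate (Nat.cast_nonneg _)) _

lemma le_of_forall_pos_le_add_coe {a b : EReal} (h : ∀ τ : ℝ, 0 < τ → a ≤ b + τ) : a ≤ b := by
  refine EReal.le_of_forall_lt_iff_le.1 fun z hz => ?_
  obtain ⟨w, hbw, hwz⟩ := EReal.lt_iff_exists_real_btwn.1 hz
  calc a ≤ b + (z - w : ℝ) := h _ (sub_pos.2 (EReal.coe_lt_coe_iff.1 hwz))
    _ ≤ w + (z - w : ℝ) := by gcongr
    _ = z := by rw [← EReal.coe_add, add_sub_cancel]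

lemma limsup_div_le_limsup_div_add {a b : ℕ → ℝ} {τ : ℝ} (h : ∀ n, a n ≤ b n + n * τ) :
    limsup (fun n => ((a n / n : ℝ) : EReal)) atTop ≤
      limsup (fun n => ((b n / n : ℝ) : EReal)) atTop + τ := by
  have hle : ∀ᶠ n : ℕ in atTop,
      ((a n / n : ℝ) : EReal) ≤ ((b n / n : ℝ) : EReal) + (τ : EReal) := by
    filter_upwards [eventually_gt_atTop 0] with n hn
    have hn' : (0 : ℝ) < n := Nat.cast_pos.2 hn
    rw [← EReal.coe_add, EReal.coe_le_coe_iff, div_add' _ _ _ hn'.ne', mul_comm τ]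
    exact div_le_div_of_nonneg_right (h n) hn'.le
  calc _ ≤ limsup (fun n : ℕ => ((b n / n : ℝ) : EReal) + (τ : EReal)) atTop := limsup_le_limsup hle
    _ ≤ limsup (fun n => ((b n / n : ℝ) : EReal)) atTop + limsup (fun _ : ℕ => (τ : EReal)) atTop :=
      EReal.limsup_add_le (by simp) (by simp)
    _ = limsup (fun n => ((b n / n : ℝ) : EReal)) atTop + τ := by rw [limsup_const]

theorem stmt6_general [MeasurableSpace X] [BorelSpace X] [SecondCountableTopology X]
    (T : X → X) (A : ℕ → ℕ) (μ : Measure X) [IsProbabilityMeasure μ]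
    (hμ : MeasurePreserving T μ μ) :
    seqEntMeas μ T A ≤
      ⨆ (δ : ℝ) (_ : 0 < δ) (_ : δ < 1) (ε : ℝ) (_ : 0 < ε),
        Filter.limsup
          (fun n : ℕ =>
            ((Real.log (spaMeasN μ T ((Finset.Icc 1 n).image A) ε δ) / n : ℝ) : EReal))
          Filter.atTop := by
  refine iSup_le fun k => iSup₂_le fun ξ hξ => le_of_forall_pos_le_add_coe fun τ hτ => ?_
  obtain ⟨δ, hδ0, hδ1, ε, hε, hH⟩ := hξ.exists_Hjoin_le_log_spaMeasN_add hμ hτ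
  have hcard (n : ℕ) : ((Finset.Icc 1 n).image A).card ≤ n :=
    Finset.card_image_le.trans (Nat.card_Icc 1 n).le
  refine (limsup_div_le_limsup_div_add (τ := τ) fun n =>
    (hH ((Finset.Icc 1 n).image A)).trans (by gcongr; exact hcard n)).trans ?_
  gcongr
  exact le_iSup₂_of_le δ hδ0 (le_iSup₂_of_le hδ1 ε (le_iSup_of_le hε le_rfl))

/-- For a continuous map `T` of a compact metric space, a `T`-invariant
Borel probability measure `μ` and a sequence `A` of naturals,
`h^A_μ(T) ≤ lim_{δ→0⁺} lim_{ε→0⁺} limsup_n (1/n) log spa(T,{t₁,…,t_n},ε,δ)`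
(the iterated limits of the antitone-in-`ε`, antitone-in-`δ` quantity are suprema over
`δ ∈ (0,1)` and `ε > 0`). -/
theorem stmt6 [MeasurableSpace X] [BorelSpace X] [CompactSpace X] [Nonempty X]
    (T : X → X) (hT : Continuous T) (A : ℕ → ℕ)
    (μ : Measure X) [IsProbabilityMeasure μ] (hμ : MeasurePreserving T μ μ) :
    seqEntMeas μ T A ≤
      ⨆ (δ : ℝ) (_ : 0 < δ) (_ : δ < 1) (ε : ℝ) (_ : 0 < ε),
        Filter.limsup
          (fun n : ℕ =>
            ((Real.log (spaMeasN μ T ((Finset.Icc 1 n).image A) ε δ) / n : ℝ) : EReal))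
          Filter.atTop := by
  exact stmt6_general T A μ hμ
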